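/- Let p ∈ ℝ, q > 0 and ℓ > 0, let N denote the standard normal cumulative distribution function, define φ(x) = exp(−p·x − (q/2)·x²) and Φ(x) = ∫₀ˣ φ(y) dy, and assume 1 − ℓ·√(2π/q)·exp(p²/(2q))·N(p/√q) > 0. Then the gradient of the price impact function, g(x) = ℓ·φ(x)/(1 + ℓ·Φ(x)), satisfies g(x) > 0 for all x ∈ ℝ and g(x) → 0 as x → +∞ and as x → −∞; that is, the price impact function f(x) = log(1 + ℓ·Φ(x)) is strictly increasing and its gradient tapers off to zero for large positive and large negative order flows. -/

import Mathlib

open Real MeasureTheory intervalIntegral Filter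

/-!
Completing the square gives `φ x = exp (p² / (2q)) * exp (-(√q x + p / √q)² / 2)`. The substitution
`z = √q x + p / √q` then turns the constraint into `0 < c` with `c = 1 - ℓ ∫_{(-∞, 0]} φ`. Since
`Φ x = ∫_{(-∞, x]} φ - ∫_{(-∞, 0]} φ` and `φ > 0`, the denominator `1 + ℓ Φ x` is bounded below by
`c`, uniformly in `x`. Hence `g > 0`, and `g ≤ ℓ φ / c` tends to `0` at both ends because `φ` does.
Strict monotonicity of `f` follows from that of `Φ`.
-/

lemma complete_square (p q : ℝ) (hq : 0 < q) (x : ℝ) :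
    Real.exp (-p * x - q / 2 * x ^ 2) =
      Real.exp (p ^ 2 / (2 * q)) * Real.exp (-(√q * x + p / √q) ^ 2 / 2) := by
  rw [← Real.exp_add]
  congr 1
  have h : √q ≠ 0 := (Real.sqrt_pos.2 hq).ne'
  have h2 : (√q * x + p / √q) ^ 2 = q * x ^ 2 + 2 * p * x + p ^ 2 / q := by
    have : (√q * x + p / √q) ^ 2 = √q ^ 2 * x ^ 2 + 2 * p * x + p ^ 2 / √q ^ 2 := by
      field_simp
      ring
    rwa [Real.sq_sqrt hq.le] at this
  rw [h2]
  field_simp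
  ring

lemma integral_Iic_comp_affine (F : ℝ → ℝ) {a : ℝ} (ha : 0 < a) (b : ℝ) :
    ∫ x in Set.Iic (0 : ℝ), F (a * x + b) = a⁻¹ * ∫ z in Set.Iic b, F z := by
  rw [← MeasureTheory.integral_indicator measurableSet_Iic,
    ← MeasureTheory.integral_indicator measurableSet_Iic]
  have h : (Set.Iic (0 : ℝ)).indicator (fun x => F (a * x + b)) =
      fun x => (fun y => (Set.Iic b).indicator F (y + b)) (a * x) := by
    funext x
    have hx : x ≤ 0 ↔ a * x + b ≤ b := by
      constructor
      · intro h
        nlinarith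
      · intro h
        by_contra! h0
        nlinarith [mul_pos ha h0]
    simp only [Set.indicator, Set.mem_Iic, hx]
  rw [h, Measure.integral_comp_mul_left, integral_add_right_eq_self, abs_of_pos (inv_pos.2 ha),
    smul_eq_mul]

lemma integrable_phi (p q : ℝ) (hq : 0 < q) :
    Integrable fun x : ℝ => Real.exp (-p * x - q / 2 * x ^ 2) := by
  simp_rw [complete_square p q hq]
  refine Integrable.const_mul ?_ _
  have h : Integrable fun x : ℝ => Real.exp (-x ^ 2 / 2) := by
    convert integrable_exp_neg_mul_sq (show (0 : ℝ) < 1 / 2 by norm_num) using 3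
    ring
  exact (h.comp_add_right (p / √q)).comp_mul_left' (Real.sqrt_pos.2 hq).ne'

/-- Stated for a general filter `l` along which the completed square diverges, so that one argument
serves both ends of the real line. -/
lemma tendsto_phi (p q : ℝ) (hq : 0 < q) (l : Filter ℝ)
    (hl : Tendsto (fun x : ℝ => (√q * x + p / √q) ^ 2) l atTop) :
    Tendsto (fun x : ℝ => Real.exp (-p * x - q / 2 * x ^ 2)) l (nhds 0) := by
  simp_rw [complete_square p q hq]
  rw [← mul_zero (Real.exp (p ^ 2 / (2 * q)))]
  refine Tendsto.const_mul _ (Real.tendsto_exp_atBot.comp ?_)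
  simp_rw [neg_div]
  exact tendsto_neg_atTop_atBot.comp (hl.atTop_div_const two_pos)

/-- For `q > 0`, `ℓ > 0`, `φ(x) = exp(−p·x − (q/2)·x²)`, `Φ(x) = ∫₀ˣ φ`,
under the constraint `1 − ℓ·√(2π/q)·exp(p²/(2q))·N(p/√q) > 0`, the gradient
`g(x) = ℓ·φ(x)/(1 + ℓ·Φ(x))` of the price impact function is strictly positive and
tends to `0` as `x → ±∞`; in particular `f(x) = log(1 + ℓ·Φ(x))` is strictly
increasing. -/
theorem stmt_16
    (p q ℓ : ℝ) (hq : 0 < q) (hℓ : 0 < ℓ)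
    (N : ℝ → ℝ)
    (hN : N = fun t => (Real.sqrt (2 * Real.pi))⁻¹ * ∫ y in Set.Iic t, Real.exp (-y ^ 2 / 2))
    (φ Φ g f : ℝ → ℝ)
    (hφ : φ = fun x => Real.exp (-p * x - q / 2 * x ^ 2))
    (hΦ : Φ = fun x => ∫ y in (0:ℝ)..x, φ y)
    (hg : g = fun x => ℓ * φ x / (1 + ℓ * Φ x))
    (hf : f = fun x => Real.log (1 + ℓ * Φ x))
    (hconstraint :
      0 < 1 - ℓ * Real.sqrt (2 * Real.pi / q) * Real.exp (p ^ 2 / (2 * q)) * N (p / Real.sqrt q)) :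
    (∀ x : ℝ, 0 < g x) ∧
    Tendsto g atTop (nhds 0) ∧
    Tendsto g atBot (nhds 0) ∧
    StrictMono f := by
  have hs : 0 < √q := Real.sqrt_pos.2 hq
  have hφpos : ∀ x, 0 < φ x := fun x => by rw [hφ]; exact Real.exp_pos _
  have hint : Integrable φ := by rw [hφ]; exact integrable_phi p q hq
  set c := 1 - ℓ * ∫ y in Set.Iic (0 : ℝ), φ y with hc
  have hcpos : 0 < c := by
    have h0 : ∫ y in Set.Iic (0 : ℝ), φ y = Real.exp (p ^ 2 / (2 * q)) *
        ((√q)⁻¹ * ∫ y in Set.Iic (p / √q), Real.exp (-y ^ 2 / 2)) := by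
      rw [← integral_Iic_comp_affine (fun z => Real.exp (-z ^ 2 / 2)) hs, hφ]
      simp_rw [complete_square p q hq]
      rw [MeasureTheory.integral_const_mul]
    have hpi : √(2 * Real.pi) ≠ 0 := (Real.sqrt_pos.2 (by positivity)).ne'
    convert hconstraint using 1
    rw [hc, h0, hN, Real.sqrt_div (by positivity)]
    field_simp
  have hΦ' : ∀ x, Φ x = (∫ y in Set.Iic x, φ y) - ∫ y in Set.Iic (0 : ℝ), φ y := fun x => by
    rw [hΦ]
    exact (integral_Iic_sub_Iic hint.integrableOn hint.integrableOn).symm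
  have hden : ∀ x, c ≤ 1 + ℓ * Φ x := fun x => by
    have h : 0 ≤ ∫ y in Set.Iic x, φ y := integral_nonneg fun y => (hφpos y).le
    rw [hΦ', hc]
    nlinarith [mul_nonneg hℓ.le h]
  have hdpos : ∀ x, 0 < 1 + ℓ * Φ x := fun x => hcpos.trans_le (hden x)
  have hgpos : ∀ x, 0 < g x := fun x => by
    rw [hg]
    exact div_pos (mul_pos hℓ (hφpos x)) (hdpos x)
  have hlim : ∀ l : Filter ℝ, Tendsto φ l (nhds 0) → Tendsto g l (nhds 0) := fun l hl => by
    have h : Tendsto (fun x => ℓ * φ x / c) l (nhds 0) := by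
      simpa using (hl.const_mul ℓ).div_const c
    refine squeeze_zero (fun x => (hgpos x).le) (fun x => ?_) h
    rw [hg]
    exact div_le_div_of_nonneg_left (mul_pos hℓ (hφpos x)).le hcpos (hden x)
  refine ⟨hgpos, hlim _ ?_, hlim _ ?_, ?_⟩
  · rw [hφ]
    refine tendsto_phi p q hq _ ((tendsto_pow_atTop two_ne_zero).comp ?_)
    exact tendsto_atTop_add_const_right _ _ (tendsto_id.const_mul_atTop hs)
  · rw [hφ]
    refine tendsto_phi p q hq _ ?_
    have h : Tendsto (fun x : ℝ => √q * x + p / √q) atBot atBot :=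
      tendsto_atBot_add_const_right _ _ (tendsto_id.const_mul_atBot hs)
    simpa only [Function.comp_def, neg_sq] using
      (tendsto_pow_atTop (α := ℝ) two_ne_zero).comp (tendsto_neg_atBot_atTop.comp h)
  · intro x y hxy
    have hlt : Φ x < Φ y := by
      have h : 0 < ∫ t in x..y, φ t :=
        intervalIntegral_pos_of_pos hint.intervalIntegrable hφpos hxy
      rw [← integral_Iic_sub_Iic hint.integrableOn hint.integrableOn] at h
      rw [hΦ', hΦ']
      linarith
    rw [hf]
    refine Real.log_lt_log (hdpos x) ?_
    nlinarith [mul_lt_mul_of_pos_left hlt hℓ]
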